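/- Let 𝕏 be a σ-finite measure space, ℳ, 𝒩 Banach L^0(𝕏)-modules, and α = Σ_{i=1}^n v_i ⊗ w_i ∈ ℳ ⊗ 𝒩. The following are equivalent: (i) α = 0; (ii) Σ_{i=1}^n ω(v_i)·w_i = 0 in 𝒩 for every ω ∈ ℳ*; (iii) Σ_{i=1}^n η(w_i)·v_i = 0 in ℳ for every η ∈ 𝒩*. -/

import Mathlib

/-!
That a null tensor satisfies the other two conditions follows by applying `ω ⊗ id` and `id ⊗ η`.
For the converse, suppose that a vector `v₀` admits `ω₀ ∈ ℳ*` with `ω₀ v₀ • v₀ = v₀`. Then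
`T x = x - ω₀ x • v₀` kills `v₀`, and if `∑ ω₀ (v i) • w i = 0`, replacing every `v i` by `T (v i)`
changes neither the tensor `∑ v i ⊗ w i` nor any of the sums `∑ ω (v i) • w i`. So the summands can
be eliminated one at a time.

Such an `ω₀` is a norming functional of `v₀`, with `ω v₀ = |v₀|` and `|ω x| ≤ |x|`, divided by
`|v₀|` where `|v₀|` does not vanish. Norming functionals come from a Hahn–Banach theorem with values
in `L⁰(𝕏)`, which needs three properties of this ring: it is Dedekind complete, every element `a`
has a quasi-inverse `b` with `a * b * a = a`, and the positive and negative parts of an element have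
product zero. The last two provide the idempotents that cut a scalar into a positive, a negative and
a zero part, each of which can be handled by the classical argument.
-/

open MeasureTheory Filter Set TensorProduct

noncomputable section

namespace Paper

variable {X : Type*} [MeasurableSpace X]

/-- The space `L⁰(𝕏)` of real-valued measurable functions up to `μ`-a.e. equality. -/
abbrev L0 (μ : Measure X) : Type _ := X →ₘ[μ] ℝ

instance (μ : Measure X) : CommRing (L0 μ) :=
  { (inferInstance : AddCommGroup (L0 μ)), (inferInstance : CommMonoid (L0 μ)) with
    left_distrib := fun a b c => AEEqFun.toGerm_injective <| by
      simp only [AEEqFun.mul_toGerm, AEEqFun.add_toGerm, mul_add]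
    right_distrib := fun a b c => AEEqFun.toGerm_injective <| by
      simp only [AEEqFun.mul_toGerm, AEEqFun.add_toGerm, add_mul]
    zero_mul := fun a => AEEqFun.toGerm_injective <| by
      simp only [AEEqFun.mul_toGerm, AEEqFun.zero_toGerm, zero_mul]
    mul_zero := fun a => AEEqFun.toGerm_injective <| by
      simp only [AEEqFun.mul_toGerm, AEEqFun.zero_toGerm, mul_zero] }

/-- The distance on `L⁰(𝕏)` inducing the topology of convergence in measure, defined through
the auxiliary finite measure `μ.toFinite` (which satisfies `μ ≪ μ.toFinite ≪ μ`). -/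
noncomputable def dL0 (μ : Measure X) [SFinite μ] (f g : L0 μ) : ℝ :=
  ∫ x, min |f x - g x| 1 ∂(μ.toFinite)

/-- A Banach `L⁰(𝕏)`-module: a module over `L⁰(𝕏)` endowed with a pointwise norm, complete
with respect to the induced distance. -/
class BanachMod (μ : Measure X) [SFinite μ] (M : Type*) [AddCommGroup M]
    [Module (L0 μ) M] where
  pn : M → L0 μ
  pn_nonneg : ∀ v : M, 0 ≤ pn v
  pn_eq_zero : ∀ v : M, pn v = 0 ↔ v = 0
  pn_add_le : ∀ v w : M, pn (v + w) ≤ pn v + pn w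
  pn_smul : ∀ (f : L0 μ) (v : M), pn (f • v) = |f| * pn v
  complete : ∀ u : ℕ → M,
    (∀ ε : ℝ, 0 < ε → ∃ N : ℕ, ∀ m ≥ N, ∀ n ≥ N, dL0 μ (pn (u m - u n)) 0 < ε) →
    ∃ v : M, Tendsto (fun n => dL0 μ (pn (u n - v)) 0) atTop (nhds 0)

/-- The pointwise norm of a Banach `L⁰(𝕏)`-module, with the measure explicit. -/
noncomputable def pn (μ : Measure X) [SFinite μ] {M : Type*} [AddCommGroup M]
    [Module (L0 μ) M] [BanachMod μ M] (v : M) : L0 μ :=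
  BanachMod.pn v

/-- The distance on a Banach `L⁰(𝕏)`-module. -/
noncomputable def dM (μ : Measure X) [SFinite μ] {M : Type*} [AddCommGroup M]
    [Module (L0 μ) M] [BanachMod μ M] (v w : M) : ℝ :=
  dL0 μ (pn μ (v - w)) 0

section Defs

variable (μ : Measure X) [SFinite μ]
variable {M N : Type*} [AddCommGroup M] [Module (L0 μ) M] [BanachMod μ M]
  [AddCommGroup N] [Module (L0 μ) N] [BanachMod μ N]

/-- The set of admissible bounds of a map between Banach `L⁰(𝕏)`-modules; the pointwise norm
`|T|` of a homomorphism is the infimum of this set. -/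
def homBddSet (T : M → N) : Set (L0 μ) :=
  {g | 0 ≤ g ∧ ∀ v, pn μ (T v) ≤ g * pn μ v}

/-- A homomorphism of Banach `L⁰(𝕏)`-modules: an `L⁰(𝕏)`-linear map admitting a bound
`g ∈ L⁰(𝕏)⁺` with `|T v| ≤ g |v|` (equivalently, `L⁰(𝕏)`-linear and continuous). -/
def IsHom (T : M →ₗ[L0 μ] N) : Prop :=
  ∃ g, g ∈ homBddSet μ (⇑T)

/-- The set of admissible bounds of an `L⁰(𝕏)`-valued map (for elements of the dual module). -/
def dualBddSet (ω : M → L0 μ) : Set (L0 μ) :=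
  {g | 0 ≤ g ∧ ∀ v, |ω v| ≤ g * pn μ v}

/-- Membership in the dual module `ℳ*`: an `L⁰(𝕏)`-linear map `ω : ℳ → L⁰(𝕏)` admitting a
bound `g ∈ L⁰(𝕏)⁺` with `|ω v| ≤ g |v|`. -/
def IsDual (ω : M →ₗ[L0 μ] L0 μ) : Prop :=
  ∃ g, g ∈ dualBddSet μ (⇑ω)

/-- Membership in the unit disc `𝔻_{ℳ*}` of the dual module: `|ω| ≤ 1`, equivalently
`|ω v| ≤ |v|` for every `v`. -/
def InDualDisc (ω : M →ₗ[L0 μ] L0 μ) : Prop :=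
  ∀ v, |ω v| ≤ pn μ v

/-- The family of pointwise norms `|s - ∑_{i ∈ F ∪ G} v i|` for `G` finite disjoint from `F`,
whose `F`-indexed inf-sup being `0` defines `s = ∑_{i∈I} v i`. -/
def sumUB {I : Type*} (v : I → M) (s : M) (F : Finset I) : Set (L0 μ) :=
  {g | ∃ G : Finset I, Disjoint G F ∧ g = pn μ (s - (∑ i ∈ F, v i + ∑ i ∈ G, v i))}

/-- `HasSumMod μ v s` means that the family `{v_i}` is summable in the Banach `L⁰(𝕏)`-module
with sum `s`, i.e. `⋀_F ⋁_G |s - ∑_{i ∈ F ∪ G} v_i| = 0` (the inner suprema being the values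
of `b`, and the outer infimum being `0`). -/
def HasSumMod {I : Type*} (v : I → M) (s : M) : Prop :=
  ∃ b : Finset I → L0 μ, (∀ F, IsLUB (sumUB μ v s F) (b F)) ∧ IsGLB (Set.range b) 0

/-- A family in a Banach `L⁰(𝕏)`-module is summable if it has a sum. -/
def SummableMod {I : Type*} (v : I → M) : Prop :=
  ∃ s, HasSumMod μ v s

/-- The partial sums `∑_{i ∈ F} |v i|` of the pointwise norms of a family; the element `|v|₁`
of `ℓ₁(I, ℳ)` is the supremum of this set. -/
def l1PartialSums {I : Type*} (v : I → M) : Set (L0 μ) :=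
  {g | ∃ F : Finset I, g = ∑ i ∈ F, pn μ (v i)}

/-- Membership in `ℓ₁(I, ℳ)`: the partial sums of the pointwise norms admit a supremum
(equivalently, an upper bound) in `L⁰(𝕏)`. -/
def Meml1 {I : Type*} (v : I → M) : Prop :=
  ∃ b, IsLUB (l1PartialSums μ v) b

/-- The partial sums `∑_{i ∈ F} |v i|` for an `L⁰(𝕏)`-valued family. -/
def l1PartialSumsF {I : Type*} (v : I → L0 μ) : Set (L0 μ) :=
  {g | ∃ F : Finset I, g = ∑ i ∈ F, |v i|}

/-- Membership in `ℓ₁(I, L⁰(𝕏))`. -/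
def Meml1F {I : Type*} (v : I → L0 μ) : Prop :=
  ∃ b, IsLUB (l1PartialSumsF μ v) b

/-- The set whose infimum defines the projective pointwise norm: all values
`∑_{i=1}^n |v_i||w_i|` over representations `α = ∑_{i=1}^n v_i ⊗ w_i`. -/
def piReps (α : M ⊗[L0 μ] N) : Set (L0 μ) :=
  {g | ∃ (n : ℕ) (v : Fin n → M) (w : Fin n → N),
    α = ∑ i, v i ⊗ₜ[L0 μ] w i ∧ g = ∑ i, pn μ (v i) * pn μ (w i)}

/-- The set whose supremum defines the injective pointwise norm: all values
`|∑_{i=1}^n ω(v_i) η(w_i)|` over representations `α = ∑_{i=1}^n v_i ⊗ w_i` and elements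
`ω ∈ 𝔻_{ℳ*}`, `η ∈ 𝔻_{𝒩*}`. -/
def epsReps (α : M ⊗[L0 μ] N) : Set (L0 μ) :=
  {g | ∃ (n : ℕ) (v : Fin n → M) (w : Fin n → N)
    (ω : M →ₗ[L0 μ] L0 μ) (η : N →ₗ[L0 μ] L0 μ), InDualDisc μ ω ∧ InDualDisc μ η ∧
    α = ∑ i, v i ⊗ₜ[L0 μ] w i ∧ g = |∑ i, ω (v i) * η (w i)|}

/-- `IsPiTensor μ M N P e` states that the Banach `L⁰(𝕏)`-module `P`, together with the
`L⁰(𝕏)`-linear map `e` defined on the algebraic tensor product, realizes the projective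
tensor product `ℳ ⊗̂_π 𝒩`: the pointwise norm of `e α` is the projective pointwise norm
`|α|_π` and the image of `e` is dense. -/
structure IsPiTensor (M N P : Type*) [AddCommGroup M] [Module (L0 μ) M] [BanachMod μ M]
    [AddCommGroup N] [Module (L0 μ) N] [BanachMod μ N]
    [AddCommGroup P] [Module (L0 μ) P] [BanachMod μ P]
    (e : M ⊗[L0 μ] N →ₗ[L0 μ] P) : Prop where
  pn_emb : ∀ α : M ⊗[L0 μ] N, IsGLB (piReps μ α) (pn μ (e α))
  dense : ∀ p : P, ∀ ε : ℝ, 0 < ε → ∃ α : M ⊗[L0 μ] N, dM μ (e α) p < ε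

/-- `IsEpsTensor μ M N P e` states that the Banach `L⁰(𝕏)`-module `P`, together with the
`L⁰(𝕏)`-linear map `e` defined on the algebraic tensor product, realizes the injective
tensor product `ℳ ⊗̂_ε 𝒩`: the pointwise norm of `e α` is the injective pointwise norm
`|α|_ε` and the image of `e` is dense. -/
structure IsEpsTensor (M N P : Type*) [AddCommGroup M] [Module (L0 μ) M] [BanachMod μ M]
    [AddCommGroup N] [Module (L0 μ) N] [BanachMod μ N]
    [AddCommGroup P] [Module (L0 μ) P] [BanachMod μ P]
    (e : M ⊗[L0 μ] N →ₗ[L0 μ] P) : Prop where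
  pn_emb : ∀ α : M ⊗[L0 μ] N, IsLUB (epsReps μ α) (pn μ (e α))
  dense : ∀ p : P, ∀ ε : ℝ, 0 < ε → ∃ α : M ⊗[L0 μ] N, dM μ (e α) p < ε

end Defs

/-! ### Regular almost `f`-rings -/

/-- Almost `f`-rings: lattice-ordered rings in which disjoint positive elements have product zero,
stated for the pair `a⁺`, `a⁻`; any disjoint pair is of this form for `a` its difference. -/
class IsAlmostFRing (R : Type*) [Ring R] [Lattice R] : Prop extends IsOrderedRing R where
  posPart_mul_negPart (a : R) : a⁺ * a⁻ = 0

/-- Von Neumann regularity: every element has a quasi-inverse. -/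
class IsVonNeumannRegular (R : Type*) [Mul R] : Prop where
  exists_mul_mul_self (a : R) : ∃ b, a * b * a = a

/-- Dedekind completeness of an ordered set, as a property rather than through a choice of
suprema. -/
class IsDedekindComplete (α : Type*) [Preorder α] : Prop where
  exists_isLUB {S : Set α} : S.Nonempty → BddAbove S → ∃ c, IsLUB S c

lemma isIdempotentElem_mul_of_mul_mul_self {S : Type*} [Semigroup S] {a b : S}
    (h : a * b * a = a) : IsIdempotentElem (a * b) := by
  rw [IsIdempotentElem, ← mul_assoc, h]

lemma le_of_mul_le_mul_of_one_sub_mul_le {R : Type*} [Ring R] [PartialOrder R]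
    [IsOrderedAddMonoid R] {e a b : R} (h : e * a ≤ e * b)
    (h' : (1 - e) * a ≤ (1 - e) * b) : a ≤ b := by
  simpa only [← add_mul, add_sub_cancel, one_mul] using add_le_add h h'

section AlmostFRing

variable {R : Type*} [CommRing R] [Lattice R] [IsAlmostFRing R]

lemma IsAlmostFRing.mul_self_nonneg (a : R) : 0 ≤ a * a :=
  calc 0 ≤ a⁺ * a⁺ + a⁻ * a⁻ :=
        add_nonneg (mul_nonneg (posPart_nonneg a) (posPart_nonneg a))
          (mul_nonneg (negPart_nonneg a) (negPart_nonneg a))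
    _ = (a⁺ - a⁻) * (a⁺ - a⁻) := by linear_combination 2 * posPart_mul_negPart a
    _ = a * a := by rw [posPart_sub_negPart]

lemma IsAlmostFRing.nonneg_of_isIdempotentElem {e : R} (he : IsIdempotentElem e) : 0 ≤ e :=
  he.eq ▸ mul_self_nonneg e

variable [IsVonNeumannRegular R]

lemma exists_nonneg_mul_mul_self {a : R} (ha : 0 ≤ a) : ∃ b, 0 ≤ b ∧ a * b * a = a := by
  obtain ⟨b, hb⟩ := IsVonNeumannRegular.exists_mul_mul_self a
  refine ⟨b * b * a, mul_nonneg (IsAlmostFRing.mul_self_nonneg b) ha, ?_⟩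
  linear_combination (a * b + 1) * hb

/-- The idempotent `e` plays the role of the indicator of `{0 < h}`. -/
lemma exists_isIdempotentElem_mul_nonneg (h : R) :
    ∃ e, IsIdempotentElem e ∧ 0 ≤ e * h ∧ (1 - e) * h ≤ 0 := by
  obtain ⟨k, hk⟩ := IsVonNeumannRegular.exists_mul_mul_self h⁺
  have heh : h⁺ * k * h = h⁺ :=
    calc h⁺ * k * h = h⁺ * k * (h⁺ - h⁻) := by rw [posPart_sub_negPart]
      _ = h⁺ := by linear_combination hk - k * IsAlmostFRing.posPart_mul_negPart h
  refine ⟨h⁺ * k, isIdempotentElem_mul_of_mul_mul_self hk, (posPart_nonneg h).trans_eq heh.symm, ?_⟩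
  rw [sub_mul, heh, one_mul]
  exact sub_nonpos.2 (le_posPart h)

end AlmostFRing

/-! ### The Hahn–Banach theorem -/

section HahnBanach

variable {R : Type*} [CommRing R] [Lattice R] {M : Type*} [AddCommGroup M] [Module R M]

/-- Sublinear maps with values in an ordered ring, the dominating maps of the Hahn–Banach
theorem. -/
structure IsSublinear (p : M → R) : Prop where
  add_le (x y : M) : p (x + y) ≤ p x + p y
  smul_of_nonneg {a : R} (ha : 0 ≤ a) (x : M) : p (a • x) = a * p x

/-- Partially defined linear functionals dominated by `p`, encoded by their graphs `G`. For
sublinear `p` the inequality alone makes `G` a graph: `(0, y) ∈ G` gives `y ≤ p 0 = 0` and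
`-y ≤ 0`. -/
def IsDominatedBy (p : M → R) (G : Submodule R (M × R)) : Prop :=
  ∀ q ∈ G, q.2 ≤ p q.1

variable {p : M → R} {G : Submodule R (M × R)}

lemma IsSublinear.map_zero (hp : IsSublinear p) : p 0 = 0 := by
  simpa using hp.smul_of_nonneg le_rfl 0

lemma IsDominatedBy.injective_fst [IsOrderedAddMonoid R] (hp : IsSublinear p)
    (hG : IsDominatedBy p G) : Function.Injective (Prod.fst ∘ G.subtype) := by
  have hle : ∀ q r : G, q.1.1 = r.1.1 → q.1.2 ≤ r.1.2 := fun q r h => by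
    simpa [h, hp.map_zero] using hG _ (G.sub_mem q.2 r.2)
  exact fun q r h => Subtype.ext (Prod.ext h (le_antisymm (hle q r h) (hle r q h.symm)))

lemma IsDominatedBy.exists_maximal (hG : IsDominatedBy p G) :
    ∃ G', G ≤ G' ∧ Maximal (IsDominatedBy p) G' :=
  zorn_le_nonempty₀ {G | IsDominatedBy p G}
    (fun C hC hchain G₀ hG₀ => ⟨sSup C, fun q hq => by
      obtain ⟨G', hG', hq'⟩ :=
        (Submodule.mem_sSup_of_directed ⟨G₀, hG₀⟩ hchain.directedOn).1 hq
      exact hC hG' q hq', fun _ => le_sSup⟩) G hG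

variable [IsAlmostFRing R] [IsVonNeumannRegular R]

/-- On the idempotent `e = h * k`, where `h` is invertible with inverse `k`, the claim is `h` times
the hypothesis at `k • q`; on `1 - e` the multiplier `h` vanishes. -/
lemma IsDominatedBy.add_mul_le_of_nonneg (hp : IsSublinear p) (hG : IsDominatedBy p G) {m : M}
    {c : R} (hmc : ∀ q ∈ G, q.2 + c ≤ p (q.1 + m)) {h : R} (hh : 0 ≤ h) {q : M × R} (hq : q ∈ G) :
    q.2 + h * c ≤ p (q.1 + h • m) := by
  obtain ⟨x, y⟩ := q
  obtain ⟨k, hk⟩ := IsVonNeumannRegular.exists_mul_mul_self h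
  have he := isIdempotentElem_mul_of_mul_mul_self hk
  have he₀ := IsAlmostFRing.nonneg_of_isIdempotentElem he
  have he₁ := IsAlmostFRing.nonneg_of_isIdempotentElem he.one_sub
  have hkill : (1 - h * k) * h = 0 := by linear_combination -hk
  refine le_of_mul_le_mul_of_one_sub_mul_le (e := h * k) ?_ ?_
  · calc h * k * (y + h * c) = h * (k * y + c) := by linear_combination c * hk
      _ ≤ h * p (k • x + m) := mul_le_mul_of_nonneg_left (hmc _ (G.smul_mem k hq)) hh
      _ = p ((h * k) • (x + h • m)) := by
        rw [← hp.smul_of_nonneg hh, smul_add, smul_add, smul_smul, smul_smul, hk]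
      _ = h * k * p (x + h • m) := hp.smul_of_nonneg he₀ _
  · calc (1 - h * k) * (y + h * c) = (1 - h * k) * y := by linear_combination c * hkill
      _ ≤ (1 - h * k) * p x := mul_le_mul_of_nonneg_left (hG _ hq) he₁
      _ = p ((1 - h * k) • (x + h • m)) := by
        rw [smul_add, smul_smul, hkill, zero_smul, add_zero, hp.smul_of_nonneg he₁]
      _ = (1 - h * k) * p (x + h • m) := hp.smul_of_nonneg he₁ _

/-- The constraints on the value `c` at `m` for the multipliers `1` and `-1` imply those for all
multipliers. -/
lemma IsDominatedBy.sup_span_singleton (hp : IsSublinear p) (hG : IsDominatedBy p G) {m : M} {c : R}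
    (hadd : ∀ q ∈ G, q.2 + c ≤ p (q.1 + m)) (hsub : ∀ q ∈ G, q.2 - c ≤ p (q.1 - m)) :
    IsDominatedBy p (G ⊔ Submodule.span R {(m, c)}) := by
  intro r hr
  obtain ⟨⟨x, y⟩, hq, _, hs, rfl⟩ := Submodule.mem_sup.1 hr
  obtain ⟨h, rfl⟩ := Submodule.mem_span_singleton.1 hs
  obtain ⟨e, he, hpos, hneg⟩ := exists_isIdempotentElem_mul_nonneg h
  have he₀ := IsAlmostFRing.nonneg_of_isIdempotentElem he
  have he₁ := IsAlmostFRing.nonneg_of_isIdempotentElem he.one_sub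
  change y + h * c ≤ p (x + h • m)
  refine le_of_mul_le_mul_of_one_sub_mul_le (e := e) ?_ ?_
  · calc e * (y + h * c) = e * y + e * h * c := by ring
      _ ≤ p (e • x + (e * h) • m) := hG.add_mul_le_of_nonneg hp hadd hpos (G.smul_mem e hq)
      _ = p (e • (x + h • m)) := by rw [smul_add, smul_smul]
      _ = e * p (x + h • m) := hp.smul_of_nonneg he₀ _
  · have hsub' : ∀ q ∈ G, q.2 + -c ≤ p (q.1 + -m) := by simpa only [← sub_eq_add_neg] using hsub
    calc (1 - e) * (y + h * c) = (1 - e) * y + -((1 - e) * h) * -c := by ring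
      _ ≤ p ((1 - e) • x + (-((1 - e) * h)) • -m) :=
        hG.add_mul_le_of_nonneg hp hsub' (neg_nonneg.2 hneg) (G.smul_mem (1 - e) hq)
      _ = p ((1 - e) • (x + h • m)) := by rw [neg_smul_neg, smul_add, smul_smul]
      _ = (1 - e) * p (x + h • m) := hp.smul_of_nonneg he₁ _

variable [IsDedekindComplete R]

lemma IsDominatedBy.exists_sup_span_singleton (hp : IsSublinear p) (hG : IsDominatedBy p G)
    (m : M) : ∃ c, IsDominatedBy p (G ⊔ Submodule.span R {(m, c)}) := by
  let lowerValues : Set R := (fun q : M × R => q.2 - p (q.1 - m)) '' G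
  have hupper : ∀ q ∈ G, p (q.1 + m) - q.2 ∈ upperBounds lowerValues := by
    rintro q hq _ ⟨r, hr, rfl⟩
    have hqr : r.2 + q.2 ≤ p (r.1 - m) + p (q.1 + m) :=
      calc r.2 + q.2 ≤ p (r.1 + q.1) := hG _ (G.add_mem hr hq)
        _ = p ((r.1 - m) + (q.1 + m)) := by congr 1; abel
        _ ≤ _ := hp.add_le _ _
    rw [sub_le_iff_le_add', ← add_sub_assoc]
    exact le_sub_iff_add_le.2 hqr
  obtain ⟨c, hc⟩ := IsDedekindComplete.exists_isLUB (S := lowerValues)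
    ⟨_, 0, G.zero_mem, rfl⟩ ⟨_, hupper 0 G.zero_mem⟩
  exact ⟨c, hG.sup_span_singleton hp (fun q hq => le_sub_iff_add_le'.1 (hc.2 (hupper q hq)))
    fun q hq => sub_le_comm.1 (hc.1 ⟨q, hq, rfl⟩)⟩

theorem IsDominatedBy.exists_linearMap (hp : IsSublinear p) (hG : IsDominatedBy p G) :
    ∃ ω : M →ₗ[R] R, G ≤ ω.graph ∧ ∀ x, ω x ≤ p x := by
  obtain ⟨G', hGG', hmax⟩ := hG.exists_maximal
  have hsurj : Function.Surjective (Prod.fst ∘ G'.subtype) := fun m => by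
    obtain ⟨c, hc⟩ := hmax.prop.exists_sup_span_singleton hp m
    have hmem : (m, c) ∈ G' := hmax.le_of_ge hc le_sup_left
      (Submodule.mem_sup_right (Submodule.mem_span_singleton_self _))
    exact ⟨⟨_, hmem⟩, rfl⟩
  obtain ⟨ω, rfl⟩ := Submodule.exists_eq_graph ⟨hmax.prop.injective_fst hp, hsurj⟩
  exact ⟨ω, hGG', fun x => hmax.prop (x, ω x) rfl⟩

end HahnBanach

/-! ### Pointwise norms -/

section PointwiseNorm

variable {R : Type*} [CommRing R] [Lattice R] {M : Type*} [AddCommGroup M] [Module R M]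

/-- A norm on an `R`-module with values in the lattice-ordered ring `R`, such as the pointwise norm
of a Banach `L⁰(𝕏)`-module. Completeness is not part of the notion. -/
structure IsPointwiseNorm (p : M → R) : Prop where
  nonneg (x : M) : 0 ≤ p x
  eq_zero_iff (x : M) : p x = 0 ↔ x = 0
  add_le (x y : M) : p (x + y) ≤ p x + p y
  smul (a : R) (x : M) : p (a • x) = |a| * p x

/-- Membership in the dual of a module with pointwise norm `p`. -/
def IsBoundedFunctional (p : M → R) (ω : M →ₗ[R] R) : Prop :=
  ∃ g, 0 ≤ g ∧ ∀ x, |ω x| ≤ g * p x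

variable {p : M → R}

lemma IsPointwiseNorm.isSublinear [IsOrderedAddMonoid R] (hp : IsPointwiseNorm p) :
    IsSublinear p where
  add_le := hp.add_le
  smul_of_nonneg ha x := by rw [hp.smul, abs_of_nonneg ha]

lemma IsPointwiseNorm.map_neg [IsOrderedRing R] (hp : IsPointwiseNorm p) (x : M) :
    p (-x) = p x := by
  rw [← neg_one_smul R x, hp.smul, abs_neg, abs_of_nonneg zero_le_one, one_mul]

lemma IsPointwiseNorm.isDominatedBy_span_singleton [IsOrderedRing R] (hp : IsPointwiseNorm p)
    (x : M) : IsDominatedBy p (Submodule.span R {(x, p x)}) := by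
  intro q hq
  obtain ⟨a, rfl⟩ := Submodule.mem_span_singleton.1 hq
  calc a * p x ≤ |a| * p x := mul_le_mul_of_nonneg_right (le_abs_self a) (hp.nonneg x)
    _ = p (a • x) := (hp.smul a x).symm

variable [IsAlmostFRing R]

lemma IsPointwiseNorm.smul_eq_self (hp : IsPointwiseNorm p) {e : R} (he : IsIdempotentElem e)
    {x : M} (hex : e * p x = p x) : e • x = x := by
  have hzero : p ((1 - e) • x) = 0 := by
    rw [hp.isSublinear.smul_of_nonneg (IsAlmostFRing.nonneg_of_isIdempotentElem he.one_sub),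
      sub_mul, hex, one_mul, sub_self]
  rw [hp.eq_zero_iff, sub_smul, one_smul, sub_eq_zero] at hzero
  exact hzero.symm

variable [IsVonNeumannRegular R]

lemma IsPointwiseNorm.exists_norming [IsDedekindComplete R] (hp : IsPointwiseNorm p) (x : M) :
    ∃ ω : M →ₗ[R] R, ω x = p x ∧ ∀ y, |ω y| ≤ p y := by
  obtain ⟨ω, hgraph, hω⟩ := (hp.isDominatedBy_span_singleton x).exists_linearMap hp.isSublinear
  refine ⟨ω, (hgraph (Submodule.mem_span_singleton_self _)).symm, fun y => abs_le'.2 ⟨hω y, ?_⟩⟩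
  calc -ω y = ω (-y) := (_root_.map_neg ω y).symm
    _ ≤ p (-y) := hω (-y)
    _ = p y := hp.map_neg y

theorem IsPointwiseNorm.exists_isBoundedFunctional_smul_self [IsDedekindComplete R]
    (hp : IsPointwiseNorm p) (x : M) :
    ∃ ω : M →ₗ[R] R, IsBoundedFunctional p ω ∧ ω x • x = x := by
  obtain ⟨ω, hωx, hω⟩ := hp.exists_norming x
  obtain ⟨k, hk₀, hk⟩ := exists_nonneg_mul_mul_self (hp.nonneg x)
  refine ⟨k • ω, ⟨k, hk₀, fun y => ?_⟩, ?_⟩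
  · have hle := mul_le_mul_of_nonneg_left ((le_abs_self _).trans (hω y)) hk₀
    have hneg := mul_le_mul_of_nonneg_left ((neg_le_abs _).trans (hω y)) hk₀
    exact abs_le'.2 ⟨hle, (mul_neg k (ω y)).symm.trans_le hneg⟩
  · rw [LinearMap.smul_apply, smul_eq_mul, hωx, mul_comm]
    exact hp.smul_eq_self (isIdempotentElem_mul_of_mul_mul_self hk) hk

end PointwiseNorm

/-! ### Null tensors -/

section NullTensor

variable {R M N ι : Type*} [CommRing R] [AddCommGroup M] [Module R M] [AddCommGroup N] [Module R N]

lemma sum_smul_eq_zero_of_sum_tmul_eq_zero {s : Finset ι} {v : ι → M} {w : ι → N}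
    (h : ∑ i ∈ s, v i ⊗ₜ[R] w i = 0) (ω : M →ₗ[R] R) : ∑ i ∈ s, ω (v i) • w i = 0 := by
  simpa using congrArg ((TensorProduct.lid R N).toLinearMap ∘ₗ ω.rTensor N) h

lemma sum_tmul_comm_eq_zero_iff {s : Finset ι} {v : ι → M} {w : ι → N} :
    ∑ i ∈ s, w i ⊗ₜ[R] v i = 0 ↔ ∑ i ∈ s, v i ⊗ₜ[R] w i = 0 := by
  simpa using (TensorProduct.comm R M N).map_eq_zero_iff (x := ∑ i ∈ s, v i ⊗ₜ[R] w i)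

lemma sum_tmul_eq_zero_of_forall_sum_smul_eq_zero {D : Set (M →ₗ[R] R)}
    (hD : ∀ x, ∃ ω ∈ D, ω x • x = x) (s : Finset ι) (v : ι → M) (w : ι → N)
    (h : ∀ ω ∈ D, ∑ i ∈ s, ω (v i) • w i = 0) : ∑ i ∈ s, v i ⊗ₜ[R] w i = 0 := by
  induction s using Finset.cons_induction generalizing v with
  | empty => rfl
  | cons a s ha ih =>
    obtain ⟨ω₀, hω₀, hva⟩ := hD (v a)
    let v' : ι → M := fun i => v i - ω₀ (v i) • v a
    have hv'a : v' a = 0 := sub_eq_zero.2 hva.symm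
    have hω : ∀ ω ∈ D, ∑ i ∈ s, ω (v' i) • w i = 0 := fun ω hω =>
      calc ∑ i ∈ s, ω (v' i) • w i = ∑ i ∈ s.cons a ha, ω (v' i) • w i := by simp [hv'a]
        _ = ∑ i ∈ s.cons a ha, ω (v i) • w i
            - ω (v a) • ∑ i ∈ s.cons a ha, ω₀ (v i) • w i := by
          simp only [v', map_sub, map_smul, smul_eq_mul, sub_smul, Finset.sum_sub_distrib,
            Finset.smul_sum, smul_smul, mul_comm]
        _ = 0 := by rw [h ω hω, h ω₀ hω₀, smul_zero, sub_zero]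
    calc ∑ i ∈ s.cons a ha, v i ⊗ₜ[R] w i
        = ∑ i ∈ s.cons a ha, v' i ⊗ₜ[R] w i
            + v a ⊗ₜ[R] ∑ i ∈ s.cons a ha, ω₀ (v i) • w i := by
          simp only [v', TensorProduct.sub_tmul, TensorProduct.smul_tmul, TensorProduct.tmul_sum,
            Finset.sum_sub_distrib, sub_add_cancel]
      _ = ∑ i ∈ s, v' i ⊗ₜ[R] w i := by simp [h ω₀ hω₀, hv'a]
      _ = 0 := ih v' hω

theorem IsPointwiseNorm.sum_tmul_eq_zero_iff [Lattice R] [IsAlmostFRing R] [IsVonNeumannRegular R]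
    [IsDedekindComplete R] {p : M → R} (hp : IsPointwiseNorm p) (s : Finset ι) (v : ι → M)
    (w : ι → N) : ∑ i ∈ s, v i ⊗ₜ[R] w i = 0 ↔
      ∀ ω : M →ₗ[R] R, IsBoundedFunctional p ω → ∑ i ∈ s, ω (v i) • w i = 0 :=
  ⟨fun h ω _ => sum_smul_eq_zero_of_sum_tmul_eq_zero h ω,
    sum_tmul_eq_zero_of_forall_sum_smul_eq_zero hp.exists_isBoundedFunctional_smul_self s v w⟩

theorem null_tensor_consequences_general [Lattice R] [IsAlmostFRing R] [IsVonNeumannRegular R]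
    [IsDedekindComplete R] {p : M → R} (hp : IsPointwiseNorm p) {q : N → R}
    (hq : IsPointwiseNorm q) (s : Finset ι) (v : ι → M) (w : ι → N) :
    (∑ i ∈ s, v i ⊗ₜ[R] w i = 0 ↔
      ∀ ω : M →ₗ[R] R, IsBoundedFunctional p ω → ∑ i ∈ s, ω (v i) • w i = 0) ∧
    (∑ i ∈ s, v i ⊗ₜ[R] w i = 0 ↔
      ∀ η : N →ₗ[R] R, IsBoundedFunctional q η → ∑ i ∈ s, η (w i) • v i = 0) :=
  ⟨hp.sum_tmul_eq_zero_iff s v w,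
    sum_tmul_comm_eq_zero_iff.symm.trans (hq.sum_tmul_eq_zero_iff s w v)⟩

end NullTensor

/-! ### The ring `L⁰(𝕏)` -/

/-- Once `S` is closed under `⊔`, a sequence in `S` along which `J` tends to its supremum over `S`
already has the supremum of `S`. -/
lemma exists_isLUB_of_strictMono_submodular {α : Type*} [Lattice α] {J : α → ℝ}
    (hJ : StrictMono J) (hsub : ∀ a b, J (a ⊔ b) + J (a ⊓ b) ≤ J a + J b)
    (hseq : ∀ f : ℕ → α, BddAbove (range f) → ∃ c, IsLUB (range f) c) {S : Set α}
    (hS : S.Nonempty) (hbdd : BddAbove S) : ∃ c, IsLUB S c := by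
  let T := supClosure S
  have hTbdd : BddAbove T := by rwa [BddAbove, upperBounds_supClosure]
  have hJT : BddAbove (J '' T) := hJ.monotone.map_bddAbove hTbdd
  obtain ⟨u, -, hu, hmem⟩ := exists_seq_tendsto_sSup ((hS.mono subset_supClosure).image J) hJT
  choose f hfT hf using hmem
  have hfT' : range f ⊆ T := range_subset_iff.2 hfT
  obtain ⟨c, hc⟩ := hseq f (hTbdd.mono hfT')
  refine ⟨c, isLUB_supClosure.1 ⟨fun t ht => ?_, fun b hb => hc.2 (upperBounds_mono_set hfT' hb)⟩⟩
  have hstep : ∀ n, J (t ⊔ c) + u n ≤ sSup (J '' T) + J c := fun n =>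
    have hfc : f n ≤ c := hc.1 (mem_range_self n)
    calc J (t ⊔ c) + u n ≤ J ((t ⊔ f n) ⊔ c) + J ((t ⊔ f n) ⊓ c) := by
          rw [sup_assoc, sup_eq_right.2 hfc, ← hf n]
          exact add_le_add le_rfl (hJ.monotone (le_inf le_sup_right hfc))
      _ ≤ J (t ⊔ f n) + J c := hsub _ _
      _ ≤ sSup (J '' T) + J c :=
        add_le_add (le_csSup hJT ⟨_, supClosed_supClosure ht (hfT n), rfl⟩) le_rfl
  have hlim : J (t ⊔ c) + sSup (J '' T) ≤ sSup (J '' T) + J c :=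
    le_of_tendsto' (hu.const_add _) hstep
  have hle : J (t ⊔ c) ≤ J c := by linarith
  exact sup_eq_right.1 (le_sup_right.eq_of_not_lt fun hlt => hle.not_gt (hJ hlt)).symm

section L0

variable {μ : Measure X}

instance : IsOrderedRing (L0 μ) :=
  haveI : IsOrderedAddMonoid (L0 μ) :=
    Function.Injective.isOrderedAddMonoid AEEqFun.toGerm AEEqFun.add_toGerm Iff.rfl
  haveI : ZeroLEOneClass (L0 μ) := ⟨(AEEqFun.mk_le_mk _ _).2 <|
    .of_forall fun _ => zero_le_one (α := ℝ)⟩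
  IsOrderedRing.of_mul_nonneg fun a b => AEEqFun.induction_on₂ a b fun f _ g _ ha hb =>
    have hf : 0 ≤ᵐ[μ] f := ha
    have hg : 0 ≤ᵐ[μ] g := hb
    EventuallyLE.mul_nonneg hf hg

instance : IsAlmostFRing (L0 μ) where
  posPart_mul_negPart a := AEEqFun.ext <| by
    filter_upwards [AEEqFun.coeFn_mul a⁺ a⁻, AEEqFun.coeFn_sup a 0, AEEqFun.coeFn_sup (-a) 0,
      AEEqFun.coeFn_neg a, AEEqFun.coeFn_zero (μ := μ) (β := ℝ)] with x hmul hpos hneg hna h0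
    have hp : a⁺ x = (a x)⁺ := by rw [posPart_def, posPart_def, hpos, h0, Pi.zero_apply]
    have hn : a⁻ x = (a x)⁻ := by rw [negPart_def, negPart_def, hneg, hna, h0]; rfl
    rw [hmul, Pi.mul_apply, hp, hn, h0, Pi.zero_apply]
    rcases le_total (a x) 0 with hx | hx
    · rw [posPart_eq_zero.2 hx, zero_mul]
    · rw [negPart_eq_zero.2 hx, mul_zero]

instance : IsVonNeumannRegular (L0 μ) where
  exists_mul_mul_self a := by
    refine ⟨AEEqFun.compMeasurable _ measurable_inv a, AEEqFun.ext ?_⟩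
    filter_upwards [AEEqFun.coeFn_mul (a * AEEqFun.compMeasurable _ measurable_inv a) a,
      AEEqFun.coeFn_mul a (AEEqFun.compMeasurable _ measurable_inv a),
      AEEqFun.coeFn_compMeasurable _ measurable_inv a] with x hmul hmul' hinv
    rw [hmul, Pi.mul_apply, hmul', Pi.mul_apply, hinv]
    exact mul_inv_mul_cancel (a x)

lemma exists_isLUB_range (f : ℕ → L0 μ) (hf : BddAbove (range f)) : ∃ c, IsLUB (range f) c := by
  obtain ⟨u, hu⟩ := hf
  have hbound : ∀ b ∈ upperBounds (range f), ∀ᵐ x ∂μ, ∀ n, f n x ≤ b x := fun b hb =>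
    ae_all_iff.2 fun n => AEEqFun.coeFn_le.2 (hb (mem_range_self n))
  have hmeas : Measurable fun x => ⨆ n, f n x := Measurable.iSup fun n => (f n).measurable
  refine ⟨AEEqFun.mk _ hmeas.aestronglyMeasurable, ?_, fun b hb => AEEqFun.coeFn_le.1 ?_⟩
  · rintro _ ⟨n, rfl⟩
    rw [← AEEqFun.coeFn_le]
    filter_upwards [hbound u hu, AEEqFun.coeFn_mk _ hmeas.aestronglyMeasurable] with x hx hmk
    rw [hmk]
    exact le_ciSup (f := fun n => f n x) ⟨u x, forall_mem_range.2 hx⟩ n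
  · filter_upwards [hbound b hb, AEEqFun.coeFn_mk _ hmeas.aestronglyMeasurable] with x hx hmk
    rw [hmk]
    exact ciSup_le hx

variable [SFinite μ]

/-- A strictly monotone real-valued modular function on `L⁰(𝕏)`; `arctan` serves as an increasing
bijection onto a bounded interval, which makes every element integrable. -/
def arctanIntegral (f : L0 μ) : ℝ := ∫ x, Real.arctan (f x) ∂μ.toFinite

lemma integrable_arctan (f : L0 μ) : Integrable (fun x => Real.arctan (f x)) μ.toFinite :=
  .of_bound (Real.measurable_arctan.comp f.measurable).aestronglyMeasurable (Real.pi / 2) <|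
    .of_forall fun _ => abs_le.2
      ⟨(Real.neg_pi_div_two_lt_arctan _).le, (Real.arctan_lt_pi_div_two _).le⟩

lemma arctanIntegral_strictMono : StrictMono (arctanIntegral (μ := μ)) := by
  intro f g hfg
  have hle : (fun x => Real.arctan (f x)) ≤ᵐ[μ.toFinite] fun x => Real.arctan (g x) := by
    rw [EventuallyLE, ae_toFinite]
    filter_upwards [AEEqFun.coeFn_le.2 hfg.le] with _ hx using Real.arctan_strictMono.monotone hx
  refine (integral_mono_ae (integrable_arctan f) (integrable_arctan g) hle).lt_of_ne fun heq => ?_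
  rw [integral_eq_iff_of_ae_le (integrable_arctan f) (integrable_arctan g) hle, EventuallyEq,
    ae_toFinite] at heq
  exact hfg.ne (AEEqFun.ext (heq.mono fun _ hx => Real.arctan_injective hx))

lemma arctanIntegral_sup_add_inf (f g : L0 μ) :
    arctanIntegral (f ⊔ g) + arctanIntegral (f ⊓ g) = arctanIntegral f + arctanIntegral g := by
  simp only [arctanIntegral]
  rw [← integral_add (integrable_arctan _) (integrable_arctan _),
    ← integral_add (integrable_arctan _) (integrable_arctan _)]
  refine integral_congr_ae ?_
  rw [EventuallyEq, ae_toFinite]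
  filter_upwards [AEEqFun.coeFn_sup f g, AEEqFun.coeFn_inf f g] with x hsup hinf
  rw [hsup, hinf, Real.arctan_strictMono.monotone.map_max, Real.arctan_strictMono.monotone.map_min,
    max_add_min]

instance : IsDedekindComplete (L0 μ) where
  exists_isLUB := exists_isLUB_of_strictMono_submodular arctanIntegral_strictMono
    (fun f g => (arctanIntegral_sup_add_inf f g).le) exists_isLUB_range

lemma isPointwiseNorm_pn {M : Type*} [AddCommGroup M] [Module (L0 μ) M] [BanachMod μ M] :
    IsPointwiseNorm (pn μ : M → L0 μ) where
  nonneg := BanachMod.pn_nonneg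
  eq_zero_iff := BanachMod.pn_eq_zero
  add_le := BanachMod.pn_add_le
  smul := BanachMod.pn_smul

end L0

/-- Let `𝕏` be a σ-finite measure space, `ℳ`, `𝒩` Banach `L⁰(𝕏)`-modules,
and `α = ∑_{i=1}^n v_i ⊗ w_i ∈ ℳ ⊗ 𝒩`. The following are equivalent: (i) `α = 0`;
(ii) `∑_{i=1}^n ω(v_i) · w_i = 0` in `𝒩` for every `ω ∈ ℳ*`; (iii) `∑_{i=1}^n η(w_i) · v_i = 0`
in `ℳ` for every `η ∈ 𝒩*`. -/
theorem null_tensor_consequences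
    (μ : Measure X) [SigmaFinite μ]
    (M : Type*) [AddCommGroup M] [Module (L0 μ) M] [BanachMod μ M]
    (N : Type*) [AddCommGroup N] [Module (L0 μ) N] [BanachMod μ N]
    (n : ℕ) (v : Fin n → M) (w : Fin n → N) :
    ((∑ i, v i ⊗ₜ[L0 μ] w i) = 0 ↔
      ∀ ω : M →ₗ[L0 μ] L0 μ, IsDual μ ω → (∑ i, ω (v i) • w i) = 0)
    ∧ ((∑ i, v i ⊗ₜ[L0 μ] w i) = 0 ↔
      ∀ η : N →ₗ[L0 μ] L0 μ, IsDual μ η → (∑ i, η (w i) • v i) = 0) :=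
  null_tensor_consequences_general isPointwiseNorm_pn isPointwiseNorm_pn Finset.univ v w

end Paper
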